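/- arXiv:1207.6128 — 3 statements merged into one kernel-verified Lean document; each statement's English description precedes it below -/
import Mathlib

section
/- Let P ⊆ ℝⁿ be a convex body containing 0 in its interior, let g : ℝⁿ → (0,∞) be a smooth positive function, and let φ : ℝⁿ → ℝ be a smooth convex function satisfying g(∇φ(x))·det D²φ(x) = e^{−φ(x)} for all x ∈ ℝⁿ with ∇φ a diffeomorphism from ℝⁿ onto the interior of P. Then: (i) the function φ(x) − φ_P(x) is globally bounded on ℝⁿ; and (ii) for every γ ∈ (0,1) the Legendre transform φ* is γ-Hölder continuous on P, i.e. there is a constant K with |φ*(p) − φ*(q)| ≤ K·‖p − q‖^γ for all p, q ∈ P. -/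
open scoped InnerProductSpace
open MeasureTheory

/-- The support function `φ_P(x) = sup_{p ∈ P} ⟨x, p⟫` of a set `P`. -/
noncomputable def suppFn {n : ℕ} (P : Set (EuclideanSpace ℝ (Fin n)))
    (x : EuclideanSpace ℝ (Fin n)) : ℝ :=
  ⨆ p : P, ⟪x, (p : EuclideanSpace ℝ (Fin n))⟫_ℝ

/-- The (real-valued) Legendre transform `φ*(p) = sup_x (⟨p, x⟩ - φ(x))`. -/
noncomputable def legendre {n : ℕ} (φ : EuclideanSpace ℝ (Fin n) → ℝ)
    (p : EuclideanSpace ℝ (Fin n)) : ℝ :=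
  ⨆ x, (⟪p, x⟫_ℝ - φ x)

/-- The Legendre transform with values in `ℝ ∪ {+∞}` (as a sup of real numbers
over a nonempty index it never takes the value `-∞`). -/
noncomputable def legendreE {n : ℕ} (φ : EuclideanSpace ℝ (Fin n) → ℝ)
    (p : EuclideanSpace ℝ (Fin n)) : EReal :=
  ⨆ x, ((⟪p, x⟫_ℝ - φ x : ℝ) : EReal)

/-- The determinant of the Hessian matrix `(∂²φ/∂x_i∂x_j)(x)`. -/
noncomputable def hessDet {n : ℕ} (φ : EuclideanSpace ℝ (Fin n) → ℝ)
    (x : EuclideanSpace ℝ (Fin n)) : ℝ :=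
  Matrix.det (Matrix.of fun i j : Fin n =>
    iteratedFDeriv ℝ 2 φ x ![EuclideanSpace.single i 1, EuclideanSpace.single j 1])

/-- The gradient map of `φ` is a diffeomorphism from `ℝⁿ` onto `S`: a smooth
bijection onto `S` with smooth inverse. -/
def IsGradDiffeoOnto {n : ℕ} (φ : EuclideanSpace ℝ (Fin n) → ℝ)
    (S : Set (EuclideanSpace ℝ (Fin n))) : Prop :=
  ContDiff ℝ (⊤ : ℕ∞) (gradient φ) ∧
  Function.Injective (gradient φ) ∧
  Set.range (gradient φ) = S ∧
  ∃ ψ : EuclideanSpace ℝ (Fin n) → EuclideanSpace ℝ (Fin n),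
    ContDiffOn ℝ (⊤ : ℕ∞) ψ S ∧ ∀ x, ψ (gradient φ x) = x

/-!
The gradient `∇φ` is monotone. If the ball of radius `s` around `∇φ x` lies in the image of `∇φ`,
moving from `∇φ x` by `s / 2` in the direction of `x` gives the centre of a ball of radius `s / 4`
inside it, and monotonicity forces the preimages of its points to have norm at least `‖x‖ / 3`.
Convexity and `0 ∈ int P` make `φ` grow linearly, so `|det D²φ| ≲ e^{-φ}` decays exponentially and
the image of `{y | ‖x‖ / 3 ≤ ‖y‖}` has volume at most `C e^{-a‖x‖}`. Comparing volumes gives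
`‖x‖ ≤ b - c log s`: the slopes of `φ*` blow up at most logarithmically at the boundary of `P`, in
particular more slowly than `t ^ (γ - 1)` at `(1 - t) p`. Summing the increments of `φ*` along the
points `(1 - 2⁻ᵏ t) p` shows that `φ*` is finite, bounded and Hölder on `P`, and an upper bound
for `φ*` on `P` is a lower bound for `φ - φ_P`. The upper bound `φ - φ_P ≤ φ 0` is the gradient
inequality `φ x - φ 0 ≤ ⟨∇φ x, x⟩`.
-/

section ConvexGradient

variable {E : Type*} [NormedAddCommGroup E] [InnerProductSpace ℝ E] [CompleteSpace E]
  {φ : E → ℝ} {s : Set E} {p q x y : E}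

lemma inner_sub_le_sub_of_convexOn (hφ : ConvexOn ℝ s φ) (hx : x ∈ s) (hy : y ∈ s)
    (hp : HasGradientAt φ p x) : ⟪p, y - x⟫_ℝ ≤ φ y - φ x := by
  have hline : ConvexOn ℝ (AffineMap.lineMap x y ⁻¹' s) (φ ∘ AffineMap.lineMap (k := ℝ) x y) :=
    hφ.comp_affineMap _
  have hderiv : HasDerivAt (φ ∘ AffineMap.lineMap x y) ⟪p, y - x⟫_ℝ (0 : ℝ) :=
    HasFDerivAt.comp_hasDerivAt (0 : ℝ) (by simpa using hp.hasFDerivAt)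
      AffineMap.hasDerivAt_lineMap
  simpa [slope_def_field] using
    hline.le_slope_of_hasDerivAt (by simpa using hx) (by simpa using hy) one_pos hderiv

lemma inner_sub_sub_nonneg_of_convexOn (hφ : ConvexOn ℝ s φ) (hx : x ∈ s) (hy : y ∈ s)
    (hp : HasGradientAt φ p x) (hq : HasGradientAt φ q y) : 0 ≤ ⟪p - q, x - y⟫_ℝ := by
  have hxy := inner_sub_le_sub_of_convexOn hφ hx hy hp
  have hyx := inner_sub_le_sub_of_convexOn hφ hy hx hq
  rw [← neg_sub x y, inner_neg_right] at hxy
  rw [inner_sub_left]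
  linarith

lemma inner_fderiv_gradient (φ : E → ℝ) (x v w : E) :
    ⟪fderiv ℝ (gradient φ) x v, w⟫_ℝ = fderiv ℝ (fderiv ℝ φ) x v w := by
  have hcomp : fderiv ℝ (gradient φ) x = _ :=
    ((InnerProductSpace.toDual ℝ E).symm : (E →L[ℝ] ℝ) ≃ₗᵢ[ℝ] E).comp_fderiv
  rw [hcomp]
  exact InnerProductSpace.toDual_symm_apply

end ConvexGradient

lemma det_fderiv_gradient {n : ℕ} (φ : EuclideanSpace ℝ (Fin n) → ℝ)
    (x : EuclideanSpace ℝ (Fin n)) : (fderiv ℝ (gradient φ) x).det = hessDet φ x := by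
  rw [hessDet, ContinuousLinearMap.det,
    ← LinearMap.det_toMatrix (EuclideanSpace.basisFun (Fin n) ℝ).toBasis, ← Matrix.det_transpose]
  congr 1
  ext i j
  have hentry := inner_fderiv_gradient φ x (EuclideanSpace.single i 1) (EuclideanSpace.single j 1)
  simpa [LinearMap.toMatrix_apply, iteratedFDeriv_two_apply, EuclideanSpace.inner_single_right]
    using hentry

section Volume

variable {E : Type*} [NormedAddCommGroup E] [NormedSpace ℝ E] [FiniteDimensional ℝ E]
  [MeasurableSpace E] [BorelSpace E] (μ : Measure E) [μ.IsAddHaarMeasure]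

lemma integrable_exp_neg_mul_norm {a : ℝ} (ha : 0 < a) :
    Integrable (fun x : E => Real.exp (-(a * ‖x‖))) μ := by
  set N := Module.finrank ℝ E + 1
  have hint : Integrable (fun x : E => (1 + ‖x‖) ^ (-(N : ℝ))) μ :=
    integrable_one_add_norm (by simp [N])
  refine (hint.const_mul (Real.exp a * N.factorial / a ^ N)).mono'
    (by fun_prop) (Filter.Eventually.of_forall fun x => ?_)
  have hexp := Real.pow_div_factorial_le_exp (a * (1 + ‖x‖)) (by positivity) N
  rw [mul_add, mul_one, Real.exp_add, ← mul_one_add, mul_pow, div_le_iff₀ (by positivity)] at hexp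
  rw [Real.norm_of_nonneg (Real.exp_pos _).le, Real.exp_neg, Real.rpow_neg (by positivity),
    Real.rpow_natCast, ← div_eq_mul_inv, div_div, inv_eq_one_div,
    div_le_div_iff₀ (by positivity) (by positivity)]
  linarith

lemma exists_measure_image_norm_ge_le {F : E → E} (hF : Differentiable ℝ F) {A a : ℝ}
    (ha : 0 < a) (hdet : ∀ x, |(fderiv ℝ F x).det| ≤ A * Real.exp (-(a * ‖x‖))) :
    ∃ C : ℝ, 0 ≤ C ∧ ∀ ρ : ℝ,
      μ (F '' {x | ρ ≤ ‖x‖}) ≤ ENNReal.ofReal (C * Real.exp (-(a / 2 * ρ))) := by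
  have hA : 0 ≤ A :=
    nonneg_of_mul_nonneg_left ((abs_nonneg _).trans (hdet 0)) (Real.exp_pos _)
  have hint := integrable_exp_neg_mul_norm μ (half_pos ha)
  refine ⟨A * ∫ x, Real.exp (-(a / 2 * ‖x‖)) ∂μ, by positivity, fun ρ => ?_⟩
  have hmeas : MeasurableSet {x : E | ρ ≤ ‖x‖} := measurableSet_le measurable_const measurable_norm
  have hsplit : ∀ x ∈ {x : E | ρ ≤ ‖x‖}, |(fderiv ℝ F x).det| ≤
      A * Real.exp (-(a / 2 * ρ)) * Real.exp (-(a / 2 * ‖x‖)) := by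
    intro x hx
    rw [mul_assoc, ← Real.exp_add]
    refine (hdet x).trans (by gcongr; nlinarith [Set.mem_ofPred_eq ▸ hx])
  calc μ (F '' {x | ρ ≤ ‖x‖})
      ≤ ∫⁻ x in {x | ρ ≤ ‖x‖}, ENNReal.ofReal |(fderiv ℝ F x).det| ∂μ :=
        addHaar_image_le_lintegral_abs_det_fderiv μ hmeas
          fun x _ => (hF x).hasFDerivAt.hasFDerivWithinAt
    _ ≤ ∫⁻ x, ENNReal.ofReal (A * Real.exp (-(a / 2 * ρ)) * Real.exp (-(a / 2 * ‖x‖))) ∂μ :=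
        (setLIntegral_mono' hmeas fun x hx => ENNReal.ofReal_le_ofReal (hsplit x hx)).trans
          (setLIntegral_le_lintegral _ _)
    _ = ENNReal.ofReal (∫ x, A * Real.exp (-(a / 2 * ρ)) * Real.exp (-(a / 2 * ‖x‖)) ∂μ) :=
        (ofReal_integral_eq_lintegral_ofReal (hint.const_mul _)
          (Filter.Eventually.of_forall fun x => by positivity)).symm
    _ = _ := by rw [integral_const_mul]; ring_nf

end Volume

section Monotone

variable {E : Type*} [NormedAddCommGroup E] [InnerProductSpace ℝ E] {F : E → E}

lemma ball_subset_image_norm_ge (hF : ∀ x y, 0 ≤ ⟪F x - F y, x - y⟫_ℝ) {x : E} {s : ℝ}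
    (hs : 0 < s) (hball : Metric.ball (F x) s ⊆ Set.range F) :
    Metric.ball (F x + (s / 2) • ‖x‖⁻¹ • x) (s / 4) ⊆ F '' {y | ‖x‖ / 3 ≤ ‖y‖} := by
  intro w hw
  set e := ‖x‖⁻¹ • x
  have he : ‖e‖ ≤ 1 := by
    rw [norm_smul, norm_inv, norm_norm]
    exact inv_mul_le_one
  have hxe : ⟪e, x⟫_ℝ = ‖x‖ := by
    rw [real_inner_smul_left, real_inner_self_eq_norm_sq, pow_two, ← mul_assoc, inv_mul_mul_self]
  obtain ⟨v, hv, rfl⟩ : ∃ v, ‖v‖ < s / 4 ∧ F x + (s / 2) • e + v = w :=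
    ⟨w - (F x + (s / 2) • e), mem_ball_iff_norm.1 hw, add_sub_cancel _ _⟩
  have hdist : ‖(s / 2) • e + v‖ ≤ 3 / 4 * s := by
    refine (norm_add_le _ _).trans ?_
    rw [norm_smul, Real.norm_of_nonneg (by positivity)]
    nlinarith
  obtain ⟨y, hy⟩ : F x + (s / 2) • e + v ∈ Set.range F :=
    hball (mem_ball_iff_norm.2 (by rw [add_assoc, add_sub_cancel_left]; linarith))
  refine ⟨y, ?_, hy⟩
  have hmono : ⟪(s / 2) • e + v, x⟫_ℝ ≤ ⟪(s / 2) • e + v, y⟫_ℝ := by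
    have := hF y x
    rwa [hy, add_assoc, add_sub_cancel_left, inner_sub_right, sub_nonneg] at this
  have hlower : s / 4 * ‖x‖ ≤ ⟪(s / 2) • e + v, x⟫_ℝ := by
    have hvx := (abs_le.1 (abs_real_inner_le_norm v x)).1
    rw [inner_add_left, real_inner_smul_left, hxe]
    nlinarith [norm_nonneg x]
  have hupper : ⟪(s / 2) • e + v, y⟫_ℝ ≤ 3 / 4 * s * ‖y‖ :=
    (real_inner_le_norm _ _).trans (by gcongr)
  have : s * (‖x‖ / 3) ≤ s * ‖y‖ := by linarith
  exact le_of_mul_le_mul_left this hs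

variable [FiniteDimensional ℝ E]

lemma exists_norm_le_sub_mul_log (hF : ∀ x y, 0 ≤ ⟪F x - F y, x - y⟫_ℝ)
    (hdiff : Differentiable ℝ F) {A a : ℝ} (ha : 0 < a)
    (hdet : ∀ x, |(fderiv ℝ F x).det| ≤ A * Real.exp (-(a * ‖x‖))) :
    ∃ b c : ℝ, 0 ≤ c ∧ ∀ x s, 0 < s → Metric.ball (F x) s ⊆ Set.range F →
      ‖x‖ ≤ b - c * Real.log s := by
  borelize E
  obtain ⟨C, hC, hvol⟩ := exists_measure_image_norm_ge_le volume hdiff ha hdet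
  set d := Module.finrank ℝ E
  set V := volume.real (Metric.ball (0 : E) 1)
  have hV : 0 < V :=
    ENNReal.toReal_pos (Metric.measure_ball_pos _ _ one_pos).ne' measure_ball_lt_top.ne
  refine ⟨6 / a * (Real.log C - Real.log V + d * Real.log 4), 6 / a * d, by positivity,
    fun x s hs hball => ?_⟩
  have hle : (s / 4) ^ d * V ≤ C * Real.exp (-(a / 2 * (‖x‖ / 3))) := by
    have hreal : volume.real (Metric.ball (F x + (s / 2) • ‖x‖⁻¹ • x) (s / 4)) =
        (s / 4) ^ d * V := by
      rw [measureReal_def, Measure.addHaar_ball_of_pos _ _ (by positivity), ENNReal.toReal_mul,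
        ENNReal.toReal_ofReal (by positivity)]
      rfl
    rw [← hreal]
    exact ENNReal.toReal_le_of_le_ofReal (by positivity)
      ((measure_mono (ball_subset_image_norm_ge hF hs hball)).trans (hvol (‖x‖ / 3)))
  have hCpos : 0 < C := by
    refine hC.lt_of_ne' fun h => ?_
    rw [h, zero_mul] at hle
    exact hle.not_gt (by positivity)
  have hlog := Real.log_le_log (by positivity) hle
  rw [Real.log_mul (by positivity) hV.ne', Real.log_pow, Real.log_div hs.ne' (by norm_num),
    Real.log_mul hCpos.ne' (Real.exp_ne_zero _), Real.log_exp] at hlog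
  have : a / 6 * ‖x‖ ≤ Real.log C - Real.log V + d * Real.log 4 - d * Real.log s := by linarith
  calc ‖x‖ = 6 / a * (a / 6 * ‖x‖) := by field_simp
    _ ≤ 6 / a * (Real.log C - Real.log V + d * Real.log 4 - d * Real.log s) := by gcongr
    _ = _ := by ring

end Monotone

section Legendre

variable {n : ℕ} {φ : EuclideanSpace ℝ (Fin n) → ℝ} {p q x : EuclideanSpace ℝ (Fin n)}

/-- The effective domain `{φ* < ∞}` of the Legendre transform, outside which the real-valued
`legendre φ` is a junk value. -/
def legendreDomain (φ : EuclideanSpace ℝ (Fin n) → ℝ) : Set (EuclideanSpace ℝ (Fin n)) :=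
  {p | BddAbove (Set.range fun x => ⟪p, x⟫_ℝ - φ x)}

lemma inner_sub_le_legendre (hp : p ∈ legendreDomain φ) (x : EuclideanSpace ℝ (Fin n)) :
    ⟪p, x⟫_ℝ - φ x ≤ legendre φ p :=
  le_ciSup hp x

lemma mem_legendreDomain_and_legendre_le_iff {b : ℝ} :
    p ∈ legendreDomain φ ∧ legendre φ p ≤ b ↔ ∀ x, ⟪p, x⟫_ℝ - φ x ≤ b :=
  ⟨fun h x => (inner_sub_le_legendre h.1 x).trans h.2,
    fun h => ⟨⟨b, Set.forall_mem_range.2 h⟩, ciSup_le h⟩⟩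

lemma isClosed_legendre_le (φ : EuclideanSpace ℝ (Fin n) → ℝ) (b : ℝ) :
    IsClosed {p | p ∈ legendreDomain φ ∧ legendre φ p ≤ b} := by
  simp only [mem_legendreDomain_and_legendre_le_iff, Set.ofPred_forall]
  exact isClosed_iInter fun x => isClosed_le (by fun_prop) continuous_const

lemma convexOn_legendre (φ : EuclideanSpace ℝ (Fin n) → ℝ) :
    ConvexOn ℝ (legendreDomain φ) (legendre φ) := by
  have hcombo : ∀ ⦃p⦄, p ∈ legendreDomain φ → ∀ ⦃q⦄, q ∈ legendreDomain φ → ∀ ⦃a b : ℝ⦄, 0 ≤ a →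
      0 ≤ b → a + b = 1 → a • p + b • q ∈ legendreDomain φ ∧
        legendre φ (a • p + b • q) ≤ a • legendre φ p + b • legendre φ q := by
    intro p hp q hq a b ha hb hab
    refine mem_legendreDomain_and_legendre_le_iff.2 fun x => ?_
    calc ⟪a • p + b • q, x⟫_ℝ - φ x = a * (⟪p, x⟫_ℝ - φ x) + b * (⟪q, x⟫_ℝ - φ x) := by
          rw [inner_add_left, real_inner_smul_left, real_inner_smul_left]
          linear_combination φ x * hab
      _ ≤ a * legendre φ p + b * legendre φ q := by
          gcongr
          exacts [inner_sub_le_legendre hp x, inner_sub_le_legendre hq x]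
  exact ⟨fun p hp q hq a b ha hb hab => (hcombo hp hq ha hb hab).1,
    fun p hp q hq a b ha hb hab => (hcombo hp hq ha hb hab).2⟩

lemma exists_mul_norm_sub_le (h0 : 0 ∈ interior (legendreDomain φ)) :
    ∃ ε C : ℝ, 0 < ε ∧ ∀ x, ε * ‖x‖ - C ≤ φ x := by
  have hcont := (convexOn_legendre φ).continuousOn_interior.continuousAt
    (isOpen_interior.mem_nhds h0)
  obtain ⟨ε, hε, hball⟩ := Metric.nhds_basis_closedBall.mem_iff.1
    (Filter.inter_mem (mem_interior_iff_mem_nhds.1 h0)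
      (hcont.eventually_le_const (lt_add_one (legendre φ 0))))
  refine ⟨ε, legendre φ 0 + 1, hε, fun x => ?_⟩
  have hmem : (ε * ‖x‖⁻¹) • x ∈ Metric.closedBall (0 : EuclideanSpace ℝ (Fin n)) ε := by
    rw [mem_closedBall_zero_iff, norm_smul, Real.norm_of_nonneg (by positivity), mul_assoc]
    exact mul_le_of_le_one_right hε.le inv_mul_le_one
  obtain ⟨hdom, hle⟩ := hball hmem
  have hinner : ⟪(ε * ‖x‖⁻¹) • x, x⟫_ℝ = ε * ‖x‖ := by
    rw [real_inner_smul_left, real_inner_self_eq_norm_sq, pow_two, mul_assoc, ← mul_assoc ‖x‖⁻¹,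
      inv_mul_mul_self]
  have hyoung := inner_sub_le_legendre hdom x
  rw [hinner] at hyoung
  linarith [Set.mem_ofPred_eq ▸ hle]

lemma legendre_eq_of_hasGradientAt (hφ : ConvexOn ℝ Set.univ φ) (hp : HasGradientAt φ p x) :
    p ∈ legendreDomain φ ∧ legendre φ p = ⟪p, x⟫_ℝ - φ x := by
  have hmax := mem_legendreDomain_and_legendre_le_iff.2 fun y => by
    have := inner_sub_le_sub_of_convexOn hφ (Set.mem_univ x) (Set.mem_univ y) hp
    rw [inner_sub_right] at this
    change ⟪p, y⟫_ℝ - φ y ≤ ⟪p, x⟫_ℝ - φ x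
    linarith
  exact ⟨hmax.1, hmax.2.antisymm (inner_sub_le_legendre hmax.1 x)⟩

lemma legendre_le_add_of_hasGradientAt (hφ : ConvexOn ℝ Set.univ φ) (hp : HasGradientAt φ p x)
    (hq : q ∈ legendreDomain φ) : legendre φ p ≤ legendre φ q + ‖x‖ * ‖p - q‖ := by
  have hyoung := inner_sub_le_legendre hq x
  have hcs := real_inner_le_norm (p - q) x
  rw [inner_sub_left] at hcs
  rw [(legendre_eq_of_hasGradientAt hφ hp).2]
  linarith

lemma suppFn_le_add {P : Set (EuclideanSpace ℝ (Fin n))} (hP : P.Nonempty) {b : ℝ}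
    (hb : ∀ p ∈ P, p ∈ legendreDomain φ ∧ legendre φ p ≤ b) (x : EuclideanSpace ℝ (Fin n)) :
    suppFn P x ≤ φ x + b := by
  have := hP.to_subtype
  refine ciSup_le fun p => ?_
  rw [real_inner_comm]
  linarith [mem_legendreDomain_and_legendre_le_iff.1 (hb p p.2) x]

lemma le_add_suppFn {P : Set (EuclideanSpace ℝ (Fin n))} (hP : Bornology.IsBounded P)
    (hφ : ConvexOn ℝ Set.univ φ) (hp : HasGradientAt φ p x) (hpP : p ∈ P) :
    φ x ≤ φ 0 + suppFn P x := by
  obtain ⟨R, hR⟩ := hP.exists_norm_le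
  have hbdd : BddAbove (Set.range fun q : P => ⟪x, (q : EuclideanSpace ℝ (Fin n))⟫_ℝ) :=
    ⟨‖x‖ * R, Set.forall_mem_range.2 fun q => (real_inner_le_norm _ _).trans
      (mul_le_mul_of_nonneg_left (hR q q.2) (norm_nonneg x))⟩
  have hsupp : ⟪x, p⟫_ℝ ≤ suppFn P x := le_ciSup hbdd ⟨p, hpP⟩
  have htangent := inner_sub_le_sub_of_convexOn hφ (Set.mem_univ x) (Set.mem_univ 0) hp
  rw [zero_sub, inner_neg_right, real_inner_comm] at htangent
  linarith

end Legendre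

-- `C / (2 ^ γ - 1)` is the sum over `j ≥ 1` of `C * 2 ^ (-j * γ)`: the added term bounds the
-- increments still to come, which makes the left-hand side nonincreasing in `k`.
lemma le_add_of_halving {f : ℝ → ℝ} {C γ : ℝ} (hγ : 0 < γ)
    (hf : ∀ t ∈ Set.Ioc (0 : ℝ) 1, f (t / 2) ≤ f t + C * (t / 2) ^ γ) (k : ℕ) :
    ∀ t ∈ Set.Ioc (0 : ℝ) 1, f (t / 2 ^ k) + C / (2 ^ γ - 1) * (t / 2 ^ k) ^ γ ≤
      f t + C / (2 ^ γ - 1) * t ^ γ := by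
  have h2 : (0 : ℝ) < 2 ^ γ - 1 := sub_pos.2 (Real.one_lt_rpow one_lt_two hγ)
  induction k with
  | zero => simp
  | succ k ih =>
    intro t ht
    have hhalf : t / 2 ∈ Set.Ioc (0 : ℝ) 1 := ⟨half_pos ht.1, by linarith [ht.1, ht.2]⟩
    have hgeom : C * (t / 2) ^ γ + C / (2 ^ γ - 1) * (t / 2) ^ γ = C / (2 ^ γ - 1) * t ^ γ := by
      have : t ^ γ = 2 ^ γ * (t / 2) ^ γ := by
        rw [← Real.mul_rpow zero_le_two hhalf.1.le, mul_div_cancel₀ t two_ne_zero]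
      rw [this]
      field_simp
      ring
    rw [pow_succ', ← div_div]
    linarith [ih (t / 2) hhalf, hf t ht]

section Holder

variable {n : ℕ} {φ : EuclideanSpace ℝ (Fin n) → ℝ} {p q : EuclideanSpace ℝ (Fin n)} {γ M R t : ℝ}

/-- The Legendre transform of `φ` has slope at most `M t ^ (γ - 1)` at the point `(1 - t) p` of the
segment from `p` to `0`: a gradient of `φ` equal to `(1 - t) p` is attained at some `x` of norm at
most `M t ^ (γ - 1)`, and such an `x` is a subgradient of the Legendre transform there. -/
def HasRadialSlopeBound (φ : EuclideanSpace ℝ (Fin n) → ℝ) (γ M : ℝ)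
    (p : EuclideanSpace ℝ (Fin n)) : Prop :=
  ∀ t ∈ Set.Ioc (0 : ℝ) 1, ∃ x, HasGradientAt φ ((1 - t) • p) x ∧ ‖x‖ ≤ M * t ^ (γ - 1)

lemma HasRadialSlopeBound.nonneg (hp : HasRadialSlopeBound φ γ M p) : 0 ≤ M := by
  obtain ⟨x, -, hx⟩ := hp 1 (Set.right_mem_Ioc.2 zero_lt_one)
  rw [Real.one_rpow, mul_one] at hx
  exact (norm_nonneg x).trans hx

lemma HasRadialSlopeBound.smul_mem_legendreDomain (hp : HasRadialSlopeBound φ γ M p)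
    (hφ : ConvexOn ℝ Set.univ φ) (ht : t ∈ Set.Ioc (0 : ℝ) 1) :
    (1 - t) • p ∈ legendreDomain φ := by
  obtain ⟨x, hx, -⟩ := hp t ht
  exact (legendre_eq_of_hasGradientAt hφ hx).1

lemma HasRadialSlopeBound.legendre_le_add (hp : HasRadialSlopeBound φ γ M p)
    (hφ : ConvexOn ℝ Set.univ φ) (ht : t ∈ Set.Ioc (0 : ℝ) 1) (hq : q ∈ legendreDomain φ) :
    legendre φ ((1 - t) • p) ≤ legendre φ q + M * t ^ (γ - 1) * ‖(1 - t) • p - q‖ := by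
  obtain ⟨x, hgrad, hx⟩ := hp t ht
  exact (legendre_le_add_of_hasGradientAt hφ hgrad hq).trans (by gcongr)

lemma HasRadialSlopeBound.legendre_half_le_add (hp : HasRadialSlopeBound φ γ M p)
    (hφ : ConvexOn ℝ Set.univ φ) (hR : ‖p‖ ≤ R) (ht : t ∈ Set.Ioc (0 : ℝ) 1) :
    legendre φ ((1 - t / 2) • p) ≤ legendre φ ((1 - t) • p) + M * R * (t / 2) ^ γ := by
  have ht2 : 0 < t / 2 := half_pos ht.1
  have hM := hp.nonneg
  have hdist : ‖(1 - t / 2) • p - (1 - t) • p‖ ≤ t / 2 * R := by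
    rw [← sub_smul, norm_smul, Real.norm_of_nonneg (by linarith)]
    nlinarith
  calc legendre φ ((1 - t / 2) • p)
      ≤ legendre φ ((1 - t) • p) + M * (t / 2) ^ (γ - 1) * ‖(1 - t / 2) • p - (1 - t) • p‖ :=
        hp.legendre_le_add hφ ⟨ht2, by linarith [ht.2]⟩ (hp.smul_mem_legendreDomain hφ ht)
    _ ≤ legendre φ ((1 - t) • p) + M * (t / 2) ^ (γ - 1) * (t / 2 * R) := by gcongr
    _ = legendre φ ((1 - t) • p) + M * R * (t / 2) ^ γ := by
        rw [Real.rpow_sub_one ht2.ne']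
        have := ht.1.ne'
        field_simp

lemma HasRadialSlopeBound.mem_legendreDomain_and_legendre_le (hp : HasRadialSlopeBound φ γ M p)
    (hφ : ConvexOn ℝ Set.univ φ) (hγ : 0 < γ) (hR : ‖p‖ ≤ R) (ht : t ∈ Set.Ioc (0 : ℝ) 1) :
    p ∈ legendreDomain φ ∧
      legendre φ p ≤ legendre φ ((1 - t) • p) + M * R / (2 ^ γ - 1) * t ^ γ := by
  have hlim : Filter.Tendsto (fun k : ℕ => (1 - t / 2 ^ k) • p) Filter.atTop (nhds p) := by
    have : Filter.Tendsto (fun k : ℕ => t / 2 ^ k) Filter.atTop (nhds 0) :=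
      tendsto_const_nhds.div_atTop (tendsto_pow_atTop_atTop_of_one_lt one_lt_two)
    simpa using (this.const_sub 1).smul_const p
  have h2 : (0 : ℝ) < 2 ^ γ - 1 := sub_pos.2 (Real.one_lt_rpow one_lt_two hγ)
  have hR0 : 0 ≤ R := (norm_nonneg p).trans hR
  have hM := hp.nonneg
  refine (isClosed_legendre_le φ _).mem_of_tendsto hlim (Filter.Eventually.of_forall fun k => ?_)
  have htk : 0 < t / 2 ^ k := div_pos ht.1 (by positivity)
  refine ⟨hp.smul_mem_legendreDomain hφ
    ⟨htk, (div_le_self ht.1.le (one_le_pow₀ one_le_two)).trans ht.2⟩, ?_⟩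
  refine le_trans (le_add_of_nonneg_right ?_)
    (le_add_of_halving (f := fun s => legendre φ ((1 - s) • p)) hγ
      (fun _ hs => hp.legendre_half_le_add hφ hR hs) k t ht)
  positivity

lemma HasRadialSlopeBound.legendre_le_add_mul_rpow (hp : HasRadialSlopeBound φ γ M p)
    (hq : q ∈ legendreDomain φ) (hφ : ConvexOn ℝ Set.univ φ) (hγ : 0 < γ)
    (hpR : ‖p‖ ≤ R) (hqR : ‖q‖ ≤ R) :
    legendre φ p ≤
      legendre φ q + (3 * M * R + M * R / (2 ^ γ - 1)) / (2 * R) ^ γ * ‖p - q‖ ^ γ := by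
  rcases eq_or_ne p q with rfl | hpq
  · simp [Real.zero_rpow hγ.ne']
  have hpos : 0 < ‖p - q‖ := norm_sub_pos_iff.2 hpq
  have htri : ‖p - q‖ ≤ 2 * R := by linarith [norm_sub_le p q]
  have hR : 0 < R := by linarith
  have hM := hp.nonneg
  set t := ‖p - q‖ / (2 * R)
  have ht : t ∈ Set.Ioc (0 : ℝ) 1 :=
    ⟨by positivity, div_le_one_of_le₀ htri (by positivity)⟩
  have hdist : ‖(1 - t) • p - q‖ ≤ 3 * R * t := by
    have hpq_eq : ‖p - q‖ = 2 * R * t := by simp only [t]; field_simp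
    have htp : ‖t • p‖ ≤ t * R := by
      rw [norm_smul, Real.norm_of_nonneg ht.1.le]
      exact mul_le_mul_of_nonneg_left hpR ht.1.le
    calc ‖(1 - t) • p - q‖ = ‖(p - q) - t • p‖ := by congr 1; module
      _ ≤ ‖p - q‖ + ‖t • p‖ := norm_sub_le _ _
      _ ≤ 3 * R * t := by linarith
  have : 0 < t ^ (γ - 1) := Real.rpow_pos_of_pos ht.1 _
  calc legendre φ p
      ≤ legendre φ ((1 - t) • p) + M * R / (2 ^ γ - 1) * t ^ γ :=
        (hp.mem_legendreDomain_and_legendre_le hφ hγ hpR ht).2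
    _ ≤ legendre φ q + M * t ^ (γ - 1) * ‖(1 - t) • p - q‖ + M * R / (2 ^ γ - 1) * t ^ γ := by
        gcongr
        exact hp.legendre_le_add hφ ht hq
    _ ≤ legendre φ q + M * t ^ (γ - 1) * (3 * R * t) + M * R / (2 ^ γ - 1) * t ^ γ := by gcongr
    _ = legendre φ q + (3 * M * R + M * R / (2 ^ γ - 1)) * t ^ γ := by
        rw [Real.rpow_sub_one ht.1.ne']
        have := ht.1.ne'
        field_simp
        ring
    _ = _ := by rw [Real.div_rpow (norm_nonneg _) (by positivity)]; ring

end Holder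

lemma ball_subset_of_convex {E : Type*} [NormedAddCommGroup E] [NormedSpace ℝ E] {P : Set E}
    (hP : Convex ℝ P) {r t : ℝ} (hball : Metric.ball 0 r ⊆ P) {p : E} (hp : p ∈ P)
    (ht : t ∈ Set.Ioc (0 : ℝ) 1) : Metric.ball ((1 - t) • p) (t * r) ⊆ P := by
  intro w hw
  have hv : t⁻¹ • (w - (1 - t) • p) ∈ P := by
    refine hball (mem_ball_zero_iff.2 ?_)
    rw [norm_smul, norm_inv, Real.norm_of_nonneg ht.1.le, inv_mul_lt_iff₀ ht.1]
    exact mem_ball_iff_norm.1 hw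
  have hw_eq : (1 - t) • p + t • t⁻¹ • (w - (1 - t) • p) = w := by
    rw [smul_inv_smul₀ ht.1.ne', add_sub_cancel]
  exact hw_eq ▸ hP hp hv (sub_nonneg.2 ht.2) ht.1.le (sub_add_cancel 1 t)

lemma exists_sub_mul_log_le_mul_rpow {γ : ℝ} (hγ : γ < 1) (b : ℝ) {c : ℝ} (hc : 0 ≤ c) :
    ∃ M : ℝ, ∀ t ∈ Set.Ioc (0 : ℝ) 1, b - c * Real.log t ≤ M * t ^ (γ - 1) := by
  have hγ' : 0 < 1 - γ := sub_pos.2 hγ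
  refine ⟨|b| + c / (1 - γ), fun t ht => ?_⟩
  have hone : 1 ≤ t ^ (γ - 1) := Real.one_le_rpow_of_pos_of_le_one_of_nonpos ht.1 ht.2 (by linarith)
  have hlog : -Real.log t ≤ t ^ (γ - 1) / (1 - γ) := by
    have := Real.log_le_rpow_div (inv_nonneg.2 ht.1.le) hγ'
    rwa [Real.log_inv, Real.inv_rpow ht.1.le, ← Real.rpow_neg ht.1.le, neg_sub] at this
  calc b - c * Real.log t = b + c * -Real.log t := by ring
    _ ≤ |b| * t ^ (γ - 1) + c * (t ^ (γ - 1) / (1 - γ)) := by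
        gcongr
        exact (le_abs_self b).trans (le_mul_of_one_le_right (abs_nonneg b) hone)
    _ = (|b| + c / (1 - γ)) * t ^ (γ - 1) := by ring

section GradientImage

variable {n : ℕ} {P : Set (EuclideanSpace ℝ (Fin n))} {φ : EuclideanSpace ℝ (Fin n) → ℝ}

lemma exists_hasRadialSlopeBound (hP : Convex ℝ P) (h0 : 0 ∈ interior P) (hφ : Differentiable ℝ φ)
    (hrange : Set.range (gradient φ) = interior P) {b c : ℝ} (hc : 0 ≤ c)
    (hlog : ∀ x s, 0 < s → Metric.ball (gradient φ x) s ⊆ Set.range (gradient φ) →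
      ‖x‖ ≤ b - c * Real.log s) {γ : ℝ} (hγ : γ < 1) :
    ∃ M : ℝ, ∀ p ∈ P, HasRadialSlopeBound φ γ M p := by
  obtain ⟨r, hr, hball⟩ := Metric.mem_nhds_iff.1 (mem_interior_iff_mem_nhds.1 h0)
  obtain ⟨M, hbound⟩ := exists_sub_mul_log_le_mul_rpow hγ (b - c * Real.log r) hc
  refine ⟨M, fun p hp t ht => ?_⟩
  have htr : 0 < t * r := mul_pos ht.1 hr
  have hsub : Metric.ball ((1 - t) • p) (t * r) ⊆ Set.range (gradient φ) :=
    hrange ▸ interior_maximal (ball_subset_of_convex hP hball hp ht) Metric.isOpen_ball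
  obtain ⟨x, hx⟩ := hsub (Metric.mem_ball_self htr)
  refine ⟨x, hx ▸ (hφ x).hasGradientAt, ?_⟩
  calc ‖x‖ ≤ b - c * Real.log (t * r) := hlog x (t * r) htr (hx ▸ hsub)
    _ = b - c * Real.log r - c * Real.log t := by
        rw [Real.log_mul ht.1.ne' hr.ne']
        ring
    _ ≤ M * t ^ (γ - 1) := hbound t ht

lemma exists_norm_le_sub_mul_log_of_hessDet_le (hφ : Differentiable ℝ φ)
    (hgrad : Differentiable ℝ (gradient φ)) (hconv : ConvexOn ℝ Set.univ φ)
    (h0 : 0 ∈ interior (Set.range (gradient φ))) {A : ℝ}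
    (hdet : ∀ x, |hessDet φ x| ≤ A * Real.exp (-φ x)) :
    ∃ b c : ℝ, 0 ≤ c ∧ ∀ x s, 0 < s →
      Metric.ball (gradient φ x) s ⊆ Set.range (gradient φ) → ‖x‖ ≤ b - c * Real.log s := by
  have hdom : Set.range (gradient φ) ⊆ legendreDomain φ :=
    Set.range_subset_iff.2 fun x => (legendre_eq_of_hasGradientAt hconv (hφ x).hasGradientAt).1
  obtain ⟨ε, C, hε, hgrowth⟩ := exists_mul_norm_sub_le (interior_mono hdom h0)
  have hA : 0 ≤ A := nonneg_of_mul_nonneg_left ((abs_nonneg _).trans (hdet 0)) (Real.exp_pos _)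
  refine exists_norm_le_sub_mul_log (A := A * Real.exp C) (a := ε)
    (fun x y => inner_sub_sub_nonneg_of_convexOn hconv (Set.mem_univ x) (Set.mem_univ y)
      (hφ x).hasGradientAt (hφ y).hasGradientAt) hgrad hε fun x => ?_
  rw [det_fderiv_gradient, mul_assoc, ← Real.exp_add]
  exact (hdet x).trans (by gcongr; linarith [hgrowth x])

lemma exists_forall_legendre_le (hP : Bornology.IsBounded P) (hφ : ConvexOn ℝ Set.univ φ)
    {γ M : ℝ} (hγ : 0 < γ) (hslope : ∀ p ∈ P, HasRadialSlopeBound φ γ M p) :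
    ∃ b : ℝ, ∀ p ∈ P, p ∈ legendreDomain φ ∧ legendre φ p ≤ b := by
  obtain ⟨R, hR⟩ := hP.exists_norm_le
  refine ⟨legendre φ 0 + M * R / (2 ^ γ - 1), fun p hp => ?_⟩
  simpa using (hslope p hp).mem_legendreDomain_and_legendre_le hφ hγ
    (hR p hp) (Set.right_mem_Ioc.2 zero_lt_one)

lemma exists_abs_sub_suppFn_le (hP : Bornology.IsBounded P) (hφ : Differentiable ℝ φ)
    (hconv : ConvexOn ℝ Set.univ φ) (hmem : ∀ x, gradient φ x ∈ P) {b : ℝ}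
    (hb : ∀ p ∈ P, p ∈ legendreDomain φ ∧ legendre φ p ≤ b) :
    ∃ C : ℝ, ∀ x, |φ x - suppFn P x| ≤ C := by
  refine ⟨max (φ 0) b, fun x => abs_le.2 ?_⟩
  have hupper := le_add_suppFn hP hconv (hφ x).hasGradientAt (hmem x)
  have hlower := suppFn_le_add ⟨_, hmem 0⟩ hb x
  constructor <;> linarith [le_max_left (φ 0) b, le_max_right (φ 0) b]

lemma exists_abs_legendre_sub_le (hP : Bornology.IsBounded P) (hφ : ConvexOn ℝ Set.univ φ)
    {γ M : ℝ} (hγ : 0 < γ) (hslope : ∀ p ∈ P, HasRadialSlopeBound φ γ M p) :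
    ∃ K : ℝ, ∀ p ∈ P, ∀ q ∈ P, |legendre φ p - legendre φ q| ≤ K * ‖p - q‖ ^ γ := by
  obtain ⟨R, hR⟩ := hP.exists_norm_le
  obtain ⟨b, hb⟩ := exists_forall_legendre_le hP hφ hγ hslope
  have honesided := fun p (hp : p ∈ P) q (hq : q ∈ P) =>
    (hslope p hp).legendre_le_add_mul_rpow (hb q hq).1 hφ hγ (hR p hp) (hR q hq)
  refine ⟨_, fun p hp q hq => abs_sub_le_iff.2 ⟨sub_le_iff_le_add'.2 (honesided p hp q hq), ?_⟩⟩
  exact sub_le_iff_le_add'.2 (norm_sub_rev q p ▸ honesided q hq p hp)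

end GradientImage

lemma exists_abs_le_mul_of_mul_eq {X ι : Type*} [TopologicalSpace X] {P : Set X} (hP : IsCompact P)
    {g : X → ℝ} (hg : ContinuousOn g P) (hgpos : ∀ p ∈ P, 0 < g p) {F : ι → X}
    (hF : ∀ x, F x ∈ P) {u v : ι → ℝ} (huv : ∀ x, g (F x) * u x = v x) :
    ∃ A : ℝ, ∀ x, |u x| ≤ A * |v x| := by
  obtain ⟨A, hA⟩ := hP.bddAbove_image (hg.inv₀ fun p hp => (hgpos p hp).ne')
  refine ⟨A, fun x => ?_⟩
  have hpos := hgpos (F x) (hF x)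
  calc |u x| = (g (F x))⁻¹ * |v x| := by
        rw [← huv, abs_mul, abs_of_pos hpos, inv_mul_cancel_left₀ hpos.ne']
    _ ≤ A * |v x| := by
        gcongr
        exact hA ⟨F x, hF x, rfl⟩

theorem statement3_general {n : ℕ} (P : Set (EuclideanSpace ℝ (Fin n)))
    (hPbdd : Bornology.IsBounded P) (hPconv : Convex ℝ P)
    (h0 : (0 : EuclideanSpace ℝ (Fin n)) ∈ interior P)
    (φ : EuclideanSpace ℝ (Fin n) → ℝ) (hφ : Differentiable ℝ φ)
    (hgrad : Differentiable ℝ (gradient φ)) (hφconv : ConvexOn ℝ Set.univ φ)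
    (A : ℝ) (hdet : ∀ x, |hessDet φ x| ≤ A * Real.exp (-φ x))
    (hrange : Set.range (gradient φ) = interior P) :
    (∃ C : ℝ, ∀ x, |φ x - suppFn P x| ≤ C) ∧
    (∀ γ ∈ Set.Ioo (0 : ℝ) 1, ∃ K : ℝ, ∀ p ∈ P, ∀ q ∈ P,
      |legendre φ p - legendre φ q| ≤ K * ‖p - q‖ ^ γ) := by
  have hmem : ∀ x, gradient φ x ∈ P := fun x => interior_subset (hrange ▸ Set.mem_range_self x)
  obtain ⟨b, c, hc, hlog⟩ := exists_norm_le_sub_mul_log_of_hessDet_le hφ hgrad hφconv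
    (by rwa [hrange, interior_interior]) hdet
  have hslope : ∀ γ < 1, ∃ M : ℝ, ∀ p ∈ P, HasRadialSlopeBound φ γ M p :=
    fun γ hγ => exists_hasRadialSlopeBound hPconv h0 hφ hrange hc hlog hγ
  refine ⟨?_, fun γ hγ => ?_⟩
  · obtain ⟨M, hbound⟩ := hslope (1 / 2) (by norm_num)
    obtain ⟨U, hU⟩ := exists_forall_legendre_le hPbdd hφconv (by norm_num) hbound
    exact exists_abs_sub_suppFn_le hPbdd hφ hφconv hmem hU
  · obtain ⟨M, hbound⟩ := hslope γ hγ.2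
    exact exists_abs_legendre_sub_le hPbdd hφconv hγ.1 hbound

/-- For a smooth convex solution `φ` of
`g(∇φ) det D²φ = e^{-φ}` whose gradient is a diffeomorphism onto the interior
of the convex body `P`: (i) `φ - φ_P` is globally bounded, and (ii) for every
Hölder exponent `γ ∈ (0,1)` the Legendre transform `φ*` is `γ`-Hölder
continuous on `P`. -/
theorem statement3 {n : ℕ} (P : Set (EuclideanSpace ℝ (Fin n)))
    (hPcomp : IsCompact P) (hPconv : Convex ℝ P)
    (h0 : (0 : EuclideanSpace ℝ (Fin n)) ∈ interior P)
    (g : EuclideanSpace ℝ (Fin n) → ℝ)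
    (hg : ContDiff ℝ (⊤ : ℕ∞) g) (hgpos : ∀ p, 0 < g p)
    (φ : EuclideanSpace ℝ (Fin n) → ℝ)
    (hφsm : ContDiff ℝ (⊤ : ℕ∞) φ) (hφconv : ConvexOn ℝ Set.univ φ)
    (hMA : ∀ x, g (gradient φ x) * hessDet φ x = Real.exp (-φ x))
    (hdiffeo : IsGradDiffeoOnto φ (interior P)) :
    (∃ C : ℝ, ∀ x, |φ x - suppFn P x| ≤ C) ∧
    (∀ γ ∈ Set.Ioo (0 : ℝ) 1, ∃ K : ℝ, ∀ p ∈ P, ∀ q ∈ P,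
      |legendre φ p - legendre φ q| ≤ K * ‖p - q‖ ^ γ) := by
  obtain ⟨A, hA⟩ := exists_abs_le_mul_of_mul_eq hPcomp hg.continuous.continuousOn
    (fun p _ => hgpos p) (fun x => interior_subset (hdiffeo.2.2.1 ▸ Set.mem_range_self x)) hMA
  exact statement3_general P hPcomp.isBounded hPconv h0 φ (hφsm.differentiable (by simp))
    (hdiffeo.1.differentiable (by simp)) hφconv A (by simpa using hA) hdiffeo.2.2.1
end

section
/- Let P ⊆ ℝⁿ be a convex body and let φ : ℝⁿ → ℝ be a convex function such that φ ≤ φ_P + C on ℝⁿ for some constant C. Then sup_{x ∈ ℝⁿ} (φ(x) − φ_P(x)) = φ(0). In particular, sup_{x ∈ ℝⁿ} (φ(x) − φ_P(x)) = 0 if and only if φ(0) = 0. -/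
open scoped InnerProductSpace
open MeasureTheory

/-!
A support function is positively homogeneous. If `φ` is convex and `φ ≤ ψ + C` with `ψ` positively
homogeneous, then `x` lies on the segment from `0` to `s⁻¹ • x` for `0 < s ≤ 1`, so convexity gives
`φ x ≤ (1 - s) * φ 0 + s * φ (s⁻¹ • x) ≤ (1 - s) * φ 0 + ψ x + s * C`.
Letting `s → 0` removes the constant: `φ x - ψ x ≤ φ 0`, with equality at `x = 0`.
-/

open Filter Topology

section PositivelyHomogeneous

variable {E : Type*} [AddCommGroup E] [Module ℝ E] {φ ψ : E → ℝ} {C : ℝ}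

theorem map_zero_of_map_smul_of_pos (hψ : ∀ t : ℝ, 0 < t → ∀ x, ψ (t • x) = t * ψ x) :
    ψ 0 = 0 := by
  have h := hψ 2 two_pos 0
  rw [smul_zero] at h
  linarith

theorem le_map_zero_add_of_convexOn_of_le_add_const
    (hψ : ∀ t : ℝ, 0 < t → ∀ x, ψ (t • x) = t * ψ x)
    (hφ : ConvexOn ℝ Set.univ φ) (hub : ∀ x, φ x ≤ ψ x + C) (x : E) :
    φ x ≤ φ 0 + ψ x := by
  have chord_bound (s : ℝ) (hs₀ : 0 < s) (hs₁ : s ≤ 1) :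
      φ x ≤ (1 - s) * φ 0 + ψ x + s * C := calc
    φ x = φ ((1 - s) • 0 + s • s⁻¹ • x) := by
      rw [smul_zero, zero_add, smul_inv_smul₀ hs₀.ne']
    _ ≤ (1 - s) * φ 0 + s * φ (s⁻¹ • x) :=
      hφ.2 (Set.mem_univ _) (Set.mem_univ _) (sub_nonneg.2 hs₁) hs₀.le (sub_add_cancel 1 s)
    _ ≤ (1 - s) * φ 0 + s * (ψ (s⁻¹ • x) + C) := by
      gcongr
      exact hub _
    _ = (1 - s) * φ 0 + ψ x + s * C := by
      rw [hψ _ (inv_pos.2 hs₀), mul_add, mul_inv_cancel_left₀ hs₀.ne', add_assoc]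
  have bound_tendsto :
      Tendsto (fun s : ℝ ↦ (1 - s) * φ 0 + ψ x + s * C) (𝓝[>] 0) (𝓝 (φ 0 + ψ x)) :=
    tendsto_nhdsWithin_of_tendsto_nhds <| Continuous.tendsto' (by fun_prop) _ _ (by ring)
  refine ge_of_tendsto bound_tendsto ?_
  filter_upwards [Ioc_mem_nhdsGT one_pos] with s hs using chord_bound s hs.1 hs.2

theorem isGreatest_range_sub_of_convexOn_of_le_add_const
    (hψ : ∀ t : ℝ, 0 < t → ∀ x, ψ (t • x) = t * ψ x)
    (hφ : ConvexOn ℝ Set.univ φ) (hub : ∀ x, φ x ≤ ψ x + C) :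
    IsGreatest (Set.range fun x ↦ φ x - ψ x) (φ 0) := by
  refine ⟨⟨0, by simp only [map_zero_of_map_smul_of_pos hψ, sub_zero]⟩, ?_⟩
  rintro _ ⟨x, rfl⟩
  exact sub_le_iff_le_add.2 (le_map_zero_add_of_convexOn_of_le_add_const hψ hφ hub x)

theorem statement7_general (hψ : ∀ t : ℝ, 0 < t → ∀ x, ψ (t • x) = t * ψ x)
    (hφ : ConvexOn ℝ Set.univ φ) (hub : ∀ x, φ x ≤ ψ x + C) :
    (⨆ x, (φ x - ψ x)) = φ 0 ∧ ((⨆ x, (φ x - ψ x)) = 0 ↔ φ 0 = 0) := by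
  have iSup_eq : (⨆ x, (φ x - ψ x)) = φ 0 :=
    (isGreatest_range_sub_of_convexOn_of_le_add_const hψ hφ hub).csSup_eq
  exact ⟨iSup_eq, by rw [iSup_eq]⟩

end PositivelyHomogeneous

theorem suppFn_smul_of_nonneg {n : ℕ} (P : Set (EuclideanSpace ℝ (Fin n))) {t : ℝ} (ht : 0 ≤ t)
    (x : EuclideanSpace ℝ (Fin n)) : suppFn P (t • x) = t * suppFn P x := by
  simp only [suppFn, real_inner_smul_left, Real.mul_iSup_of_nonneg ht]

/-- If `φ` is convex and `φ ≤ φ_P + C`, then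
`sup_x (φ(x) - φ_P(x)) = φ(0)`; in particular this sup vanishes iff
`φ(0) = 0`. -/
theorem statement7 {n : ℕ} (P : Set (EuclideanSpace ℝ (Fin n)))
    (hPcomp : IsCompact P) (hPconv : Convex ℝ P)
    (hPint : (interior P).Nonempty)
    (φ : EuclideanSpace ℝ (Fin n) → ℝ)
    (hφconv : ConvexOn ℝ Set.univ φ)
    (C : ℝ) (hub : ∀ x, φ x ≤ suppFn P x + C) :
    (⨆ x, (φ x - suppFn P x)) = φ 0 ∧
    ((⨆ x, (φ x - suppFn P x)) = 0 ↔ φ 0 = 0) :=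
  statement7_general (fun _ ht ↦ suppFn_smul_of_nonneg P ht.le) hφconv hub
end

section
/- Let P ⊆ ℝⁿ be a convex body and let φ : ℝⁿ → ℝ be a convex function satisfying φ ≤ φ_P + C on ℝⁿ for some constant C. Then there exists a sequence (φ_j) of smooth, strictly convex functions on ℝⁿ, each satisfying that φ_j − φ_P is bounded on ℝⁿ, such that φ_j decreases pointwise to φ as j → ∞. -/
open scoped InnerProductSpace
open MeasureTheory

/-!
Truncating `φ` to `max φ (h - j)`, where `h = φ_P`, gives convex functions at bounded distance from
`h` that decrease to `φ`. They are Lipschitz, because a convex function of at most linear growth is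
Lipschitz, so convolving with a bump function of small support moves them by a uniformly small
amount; adding constants makes the resulting smooth convex functions `A j` decrease to `φ`.

Strict convexity is restored by a smooth maximum. A ball of radius `r` around `p` inside `P` gives
the smooth strictly convex minorant `u x = ⟪x, p⟫ + r (√(1 + ‖x‖²) - 1)` of `h`. Then
`log (exp (A j) + exp (u - j))` is smooth, strictly convex and within `log 2` of `A j`, and it still
decreases to `φ` because `u - j → -∞`.
-/

open Filter Topology
open scoped ContDiff

section LogSumExp

/-- The log-sum-exp function of two variables, used as a smooth substitute for `max a b`. -/
noncomputable def logSumExp (a b : ℝ) : ℝ :=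
  Real.log (Real.exp a + Real.exp b)

theorem left_le_logSumExp (a b : ℝ) : a ≤ logSumExp a b :=
  (Real.le_log_iff_exp_le (by positivity)).2 (by linarith [Real.exp_pos b])

theorem logSumExp_mono {a a' b b' : ℝ} (ha : a ≤ a') (hb : b ≤ b') :
    logSumExp a b ≤ logSumExp a' b' :=
  Real.log_le_log (by positivity) (by gcongr)

theorem logSumExp_self (a : ℝ) : logSumExp a a = a + Real.log 2 := by
  rw [logSumExp, ← mul_two, Real.log_mul (by positivity) two_ne_zero, Real.log_exp]

theorem logSumExp_le_add_log_two {a b : ℝ} (h : b ≤ a) : logSumExp a b ≤ a + Real.log 2 :=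
  (logSumExp_mono le_rfl h).trans_eq (logSumExp_self a)

theorem logSumExp_lt_iff {a b c : ℝ} :
    logSumExp a b < c ↔ Real.exp (a - c) + Real.exp (b - c) < 1 := by
  rw [logSumExp, Real.log_lt_iff_lt_exp (by positivity), Real.exp_sub, Real.exp_sub, ← add_div,
    div_lt_one (by positivity)]

theorem exp_sub_logSumExp_add_exp_sub_logSumExp (a b : ℝ) :
    Real.exp (a - logSumExp a b) + Real.exp (b - logSumExp a b) = 1 := by
  rw [Real.exp_sub, Real.exp_sub, ← add_div, logSumExp, Real.exp_log (by positivity),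
    div_self (by positivity)]

theorem tendsto_logSumExp_of_tendsto_atBot {ι : Type*} {l : Filter ι} {a b : ι → ℝ} {c : ℝ}
    (ha : Tendsto a l (𝓝 c)) (hb : Tendsto b l atBot) :
    Tendsto (fun i => logSumExp (a i) (b i)) l (𝓝 c) := by
  have hsum : Tendsto (fun i => Real.exp (a i) + Real.exp (b i)) l (𝓝 (Real.exp c)) := by
    simpa only [add_zero] using!
      ha.rexp.add (Real.tendsto_exp_atBot.comp hb)
  simpa only [logSumExp, Real.log_exp] using hsum.log (Real.exp_ne_zero c)

theorem contDiff_logSumExp {E : Type*} [NormedAddCommGroup E] [NormedSpace ℝ E]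
    {m : WithTop ℕ∞} {f g : E → ℝ} (hf : ContDiff ℝ m f) (hg : ContDiff ℝ m g) :
    ContDiff ℝ m fun x => logSumExp (f x) (g x) :=
  (hf.exp.add hg.exp).log fun _ => by positivity

theorem strictConvexOn_logSumExp {E : Type*} [AddCommMonoid E] [Module ℝ E] {s : Set E}
    {f g : E → ℝ} (hf : ConvexOn ℝ s f) (hg : StrictConvexOn ℝ s g) :
    StrictConvexOn ℝ s fun x => logSumExp (f x) (g x) := by
  refine ⟨hf.1, fun x hx y hy hxy a b ha hb hab => ?_⟩
  set X := logSumExp (f x) (g x) with hX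
  set Y := logSumExp (f y) (g y) with hY
  have exp_convex (p q : ℝ) : Real.exp (a * p + b * q) ≤ a * Real.exp p + b * Real.exp q :=
    convexOn_exp.2 (Set.mem_univ p) (Set.mem_univ q) ha.le hb.le hab
  have hf_exp : Real.exp (f (a • x + b • y) - (a * X + b * Y)) ≤
      a * Real.exp (f x - X) + b * Real.exp (f y - Y) := by
    refine le_trans (Real.exp_le_exp.2 ?_) (exp_convex _ _)
    have := hf.2 hx hy ha.le hb.le hab
    simp only [smul_eq_mul] at this
    linarith
  have hg_exp : Real.exp (g (a • x + b • y) - (a * X + b * Y)) <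
      a * Real.exp (g x - X) + b * Real.exp (g y - Y) := by
    refine lt_of_lt_of_le (Real.exp_lt_exp.2 ?_) (exp_convex _ _)
    have := hg.2 hx hy hxy ha hb hab
    simp only [smul_eq_mul] at this
    linarith
  refine logSumExp_lt_iff.2 ((add_lt_add_of_le_of_lt hf_exp hg_exp).trans_eq ?_)
  calc a * Real.exp (f x - X) + b * Real.exp (f y - Y) +
        (a * Real.exp (g x - X) + b * Real.exp (g y - Y))
      = a * (Real.exp (f x - X) + Real.exp (g x - X)) +
        b * (Real.exp (f y - Y) + Real.exp (g y - Y)) := by ring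
    _ = 1 := by
      rw [hX, hY, exp_sub_logSumExp_add_exp_sub_logSumExp,
        exp_sub_logSumExp_add_exp_sub_logSumExp, mul_one, mul_one, hab]

end LogSumExp

section Growth

theorem mul_sub_le_sub_of_convexOn {E : Type*} [AddCommGroup E] [Module ℝ E] {ψ : E → ℝ}
    (hψ : ConvexOn ℝ Set.univ ψ) (x v : E) {t : ℝ} (ht : 1 ≤ t) :
    t * (ψ (x + v) - ψ x) ≤ ψ (x + t • v) - ψ x := by
  have ht_pos : 0 < t := by linarith
  have hconv := hψ.2 (Set.mem_univ x) (Set.mem_univ (x + t • v))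
    (sub_nonneg.2 (inv_le_one_of_one_le₀ ht)) (inv_nonneg.2 ht_pos.le) (sub_add_cancel 1 t⁻¹)
  have hpoint : (1 - t⁻¹) • x + t⁻¹ • (x + t • v) = x + v := by
    rw [smul_add, inv_smul_smul₀ ht_pos.ne']
    module
  rw [hpoint, smul_eq_mul, smul_eq_mul] at hconv
  calc t * (ψ (x + v) - ψ x)
      ≤ t * ((1 - t⁻¹) * ψ x + t⁻¹ * ψ (x + t • v) - ψ x) := by gcongr
    _ = ψ (x + t • v) - ψ x := by field_simp; ring

variable {E : Type*} [NormedAddCommGroup E] [NormedSpace ℝ E] {ψ : E → ℝ}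

theorem lipschitzWith_of_convexOn_of_le_add_mul_norm (hψ : ConvexOn ℝ Set.univ ψ) {c : ℝ}
    {K : NNReal} (hgrowth : ∀ x, ψ x ≤ c + K * ‖x‖) : LipschitzWith K ψ := by
  refine LipschitzWith.of_le_add_mul K fun x y => ?_
  set d := ψ x - ψ y - K * ‖x - y‖ with hd
  have hbound (t : ℝ) (ht : 1 ≤ t) : t * d ≤ c + K * ‖y‖ - ψ y := by
    have hray := mul_sub_le_sub_of_convexOn hψ y (x - y) ht
    rw [add_sub_cancel] at hray
    have hnorm : ‖y + t • (x - y)‖ ≤ ‖y‖ + t * ‖x - y‖ := by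
      simpa only [norm_smul, Real.norm_of_nonneg (zero_le_one.trans ht)] using
        norm_add_le y (t • (x - y))
    calc t * d = t * (ψ x - ψ y) - t * (K * ‖x - y‖) := by rw [hd]; ring
      _ ≤ c + K * (‖y‖ + t * ‖x - y‖) - ψ y - t * (K * ‖x - y‖) := by
        linarith [hgrowth (y + t • (x - y)), mul_le_mul_of_nonneg_left hnorm K.coe_nonneg]
      _ = c + K * ‖y‖ - ψ y := by ring
  have hd_nonpos : d ≤ 0 := by
    by_contra! hd_pos
    obtain ⟨t, ht⟩ := exists_gt (max 1 ((c + K * ‖y‖ - ψ y) / d))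
    rw [max_lt_iff, div_lt_iff₀ hd_pos] at ht
    exact (hbound t ht.1.le).not_gt ht.2
  rw [dist_eq_norm]
  linarith

theorem lipschitzWith_of_convexOn_of_le_add_const {h : E → ℝ} {K : NNReal} {C : ℝ}
    (hψ : ConvexOn ℝ Set.univ ψ) (hlip : LipschitzWith K h) (hub : ∀ x, ψ x ≤ h x + C) :
    LipschitzWith K ψ := by
  refine lipschitzWith_of_convexOn_of_le_add_mul_norm hψ (c := h 0 + C) fun x => ?_
  have := hlip.le_add_mul x 0
  rw [dist_zero_right] at this
  linarith [hub x]

end Growth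

section Mollification

open scoped Convolution

theorem convexOn_convolution {E : Type*} [AddCommGroup E] [Module ℝ E]
    [MeasurableSpace E] {μ : Measure E} {k ψ : E → ℝ} (hk : ∀ t, 0 ≤ k t)
    (hψ : ConvexOn ℝ Set.univ ψ)
    (hexists : ConvolutionExists k ψ (ContinuousLinearMap.lsmul ℝ ℝ) μ) :
    ConvexOn ℝ Set.univ (k ⋆[ContinuousLinearMap.lsmul ℝ ℝ, μ] ψ) := by
  refine integral_convexOn_of_integrand_ae convex_univ (ae_of_all μ fun t => ?_)
    fun x _ => hexists x
  simpa only [Set.preimage_univ, Function.comp_def, sub_eq_add_neg,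
    ContinuousLinearMap.lsmul_apply] using! (hψ.translate_left (-t)).smul (hk t)

variable {E : Type*} [NormedAddCommGroup E] [NormedSpace ℝ E] [FiniteDimensional ℝ E]

theorem exists_contDiff_convexOn_dist_le {ψ : E → ℝ} (hψ : ConvexOn ℝ Set.univ ψ)
    (hcont : UniformContinuous ψ) {ε : ℝ} (hε : 0 < ε) :
    ∃ A : E → ℝ, ContDiff ℝ ∞ A ∧ ConvexOn ℝ Set.univ A ∧ ∀ x, dist (A x) (ψ x) ≤ ε := by
  borelize E
  obtain ⟨δ, hδ, hψδ⟩ := Metric.uniformContinuous_iff.1 hcont ε hε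
  let B : ContDiffBump (0 : E) := ⟨δ / 2, δ, half_pos hδ, half_lt_self hδ⟩
  let μ : Measure E := Measure.addHaar
  have hloc : LocallyIntegrable ψ μ := hcont.continuous.locallyIntegrable
  refine ⟨B.normed μ ⋆[ContinuousLinearMap.lsmul ℝ ℝ, μ] ψ,
    B.hasCompactSupport_normed.contDiff_convolution_left _ B.contDiff_normed hloc,
    convexOn_convolution B.nonneg_normed hψ
      (B.hasCompactSupport_normed.convolutionExists_left _ B.continuous_normed hloc),
    fun x => B.dist_normed_convolution_le hcont.continuous.aestronglyMeasurable
      fun y hy => (hψδ hy).le⟩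

theorem exists_contDiff_convexOn_between {ψ : E → ℝ} (hψ : ConvexOn ℝ Set.univ ψ)
    (hcont : UniformContinuous ψ) {a b : ℝ} (hab : a < b) :
    ∃ A : E → ℝ, ContDiff ℝ ∞ A ∧ ConvexOn ℝ Set.univ A ∧
      ∀ x, ψ x + a ≤ A x ∧ A x ≤ ψ x + b := by
  obtain ⟨A, hA_smooth, hA_conv, hA_dist⟩ :=
    exists_contDiff_convexOn_dist_le hψ hcont (half_pos (sub_pos.2 hab))
  refine ⟨fun x => A x + (a + b) / 2, hA_smooth.add contDiff_const, hA_conv.add_const _,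
    fun x => ?_⟩
  have := abs_le.1 (hA_dist x)
  constructor <;> linarith

theorem exists_antitone_contDiff_convexOn_approx {ψ : ℕ → E → ℝ}
    (hψ : ∀ j, ConvexOn ℝ Set.univ (ψ j)) (hcont : ∀ j, UniformContinuous (ψ j))
    (hanti : ∀ x, Antitone fun j => ψ j x) :
    ∃ A : ℕ → E → ℝ, (∀ j, ContDiff ℝ ∞ (A j)) ∧ (∀ j, ConvexOn ℝ Set.univ (A j)) ∧
      (∀ x, Antitone fun j => A j x) ∧
      ∀ j x, ψ j x ≤ A j x ∧ A j x ≤ ψ j x + 1 / ((j : ℝ) + 1) := by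
  have hdecr (j : ℕ) : 1 / (((j + 1 : ℕ) : ℝ) + 1) < 1 / ((j : ℝ) + 1) := by
    push_cast
    gcongr
    linarith
  choose A hA_smooth hA_conv hA_between using fun j =>
    exists_contDiff_convexOn_between (hψ j) (hcont j) (hdecr j)
  refine ⟨A, hA_smooth, hA_conv, fun x => antitone_nat_of_succ_le fun j => ?_,
    fun j x => ⟨?_, (hA_between j x).2⟩⟩
  · linarith [hanti x j.le_succ, (hA_between j x).1, (hA_between (j + 1) x).2]
  · exact (le_add_of_nonneg_right (by positivity)).trans (hA_between j x).1

end Mollification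

section StrictConvexity

theorem strictConvexOn_const_mul {E : Type*} [AddCommMonoid E] [Module ℝ E] {s : Set E}
    {f : E → ℝ} {c : ℝ} (hc : 0 < c) (hf : StrictConvexOn ℝ s f) :
    StrictConvexOn ℝ s fun x => c * f x := by
  refine ⟨hf.1, fun x hx y hy hxy a b ha hb hab => ?_⟩
  calc c * f (a • x + b • y) < c * (a • f x + b • f y) :=
        mul_lt_mul_of_pos_left (hf.2 hx hy hxy ha hb hab) hc
    _ = a • (c * f x) + b • (c * f y) := by simp only [smul_eq_mul]; ring

variable {F : Type*} [NormedAddCommGroup F] [InnerProductSpace ℝ F]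

theorem strictConvexOn_sqrt_one_add_norm_sq :
    StrictConvexOn ℝ Set.univ fun x : F => √(1 + ‖x‖ ^ 2) := by
  -- `√(1 + ‖x‖²)` is the norm of `(1, x)` in the strictly convex space `ℝ × F`, and two distinct
  -- vectors of the form `(1, x)` never lie on a common ray.
  let lift (x : F) : WithLp 2 (ℝ × F) := WithLp.toLp 2 (1, x)
  have norm_lift (x : F) : √(1 + ‖x‖ ^ 2) = ‖lift x‖ := by
    simp [lift, WithLp.prod_norm_eq_of_L2]
  have lift_ne_zero (x : F) : lift x ≠ 0 := fun h => one_ne_zero (congrArg WithLp.fst h)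
  refine ⟨convex_univ, fun x _ y _ hxy a b ha hb hab => ?_⟩
  have hray : ¬SameRay ℝ (a • lift x) (b • lift y) := by
    intro hsame
    obtain ⟨r, s, hr, -, hrs⟩ := hsame.exists_pos (smul_ne_zero ha.ne' (lift_ne_zero x))
      (smul_ne_zero hb.ne' (lift_ne_zero y))
    have hfst : r * a = s * b := by simpa [lift] using congrArg WithLp.fst hrs
    have hsnd : (r * a) • x = (s * b) • y := by
      simpa [lift, smul_smul] using congrArg WithLp.snd hrs
    rw [← hfst] at hsnd
    exact hxy (smul_right_injective F (mul_pos hr ha).ne' hsnd)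
  have hlift : lift (a • x + b • y) = a • lift x + b • lift y := by
    simp [lift, ← WithLp.toLp_add, ← WithLp.toLp_smul, hab]
  simpa only [norm_lift, hlift, norm_smul, Real.norm_of_nonneg, ha.le, hb.le, smul_eq_mul] using
    norm_add_lt_of_not_sameRay hray

end StrictConvexity

section SupportFunction

variable {n : ℕ} {P : Set (EuclideanSpace ℝ (Fin n))}

theorem inner_le_mul_norm_of_norm_le {F : Type*} [NormedAddCommGroup F] [InnerProductSpace ℝ F]
    {p : F} {R : ℝ} (hp : ‖p‖ ≤ R) (x : F) : ⟪x, p⟫_ℝ ≤ R * ‖x‖ := by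
  rw [mul_comm]
  exact (real_inner_le_norm x p).trans (by gcongr)

theorem inner_le_suppFn (hP : Bornology.IsBounded P) {p : EuclideanSpace ℝ (Fin n)} (hp : p ∈ P)
    (x : EuclideanSpace ℝ (Fin n)) : ⟪x, p⟫_ℝ ≤ suppFn P x := by
  obtain ⟨R, hR⟩ := hP.exists_norm_le
  have hbdd : BddAbove (Set.range fun q : P => ⟪x, (q : EuclideanSpace ℝ (Fin n))⟫_ℝ) :=
    ⟨R * ‖x‖, Set.forall_mem_range.2 fun q => inner_le_mul_norm_of_norm_le (hR q q.2) x⟩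
  exact le_ciSup hbdd ⟨p, hp⟩

theorem suppFn_le (hne : P.Nonempty) {x : EuclideanSpace ℝ (Fin n)} {c : ℝ}
    (hc : ∀ p ∈ P, ⟪x, p⟫_ℝ ≤ c) : suppFn P x ≤ c :=
  have := hne.to_subtype
  ciSup_le fun p => hc p p.2

theorem convexOn_suppFn (hP : Bornology.IsBounded P) (hne : P.Nonempty) :
    ConvexOn ℝ Set.univ (suppFn P) := by
  refine ⟨convex_univ, fun x _ y _ a b ha hb _ => suppFn_le hne fun p hp => ?_⟩
  rw [inner_add_left, real_inner_smul_left, real_inner_smul_left, smul_eq_mul, smul_eq_mul]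
  gcongr <;> exact inner_le_suppFn hP hp _

theorem exists_lipschitzWith_suppFn (hP : Bornology.IsBounded P) (hne : P.Nonempty) :
    ∃ K, LipschitzWith K (suppFn P) := by
  obtain ⟨R, hR_pos, hR⟩ := hP.exists_pos_norm_le
  refine ⟨⟨R, hR_pos.le⟩, lipschitzWith_of_convexOn_of_le_add_mul_norm (c := 0)
    (convexOn_suppFn hP hne) fun x => ?_⟩
  rw [zero_add]
  exact suppFn_le hne fun p hp => inner_le_mul_norm_of_norm_le (hR p hp) x

theorem inner_add_mul_norm_le_suppFn (hP : Bornology.IsBounded P)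
    {p : EuclideanSpace ℝ (Fin n)} {r : ℝ} (hr : 0 ≤ r) (hball : Metric.closedBall p r ⊆ P)
    (x : EuclideanSpace ℝ (Fin n)) : ⟪x, p⟫_ℝ + r * ‖x‖ ≤ suppFn P x := by
  -- For `x = 0` the convention `0⁻¹ = 0` replaces the unit vector `x / ‖x‖` by `0`.
  have hmem : p + r • (‖x‖⁻¹ • x) ∈ P := by
    refine hball ?_
    rw [mem_closedBall_iff_norm, add_sub_cancel_left, norm_smul, Real.norm_of_nonneg hr]
    refine mul_le_of_le_one_right hr ?_
    rw [norm_smul, norm_inv, norm_norm]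
    exact inv_mul_le_one
  have hinner : ⟪x, ‖x‖⁻¹ • x⟫_ℝ = ‖x‖ := by
    rw [real_inner_smul_right, real_inner_self_eq_norm_sq, sq, ← mul_assoc,
      inv_mul_mul_self]
  simpa only [inner_add_right, real_inner_smul_right x _ r, hinner] using inner_le_suppFn hP hmem x

theorem exists_contDiff_strictConvexOn_le_suppFn (hP : Bornology.IsBounded P)
    (hint : (interior P).Nonempty) :
    ∃ u : EuclideanSpace ℝ (Fin n) → ℝ, ContDiff ℝ ∞ u ∧ StrictConvexOn ℝ Set.univ u ∧
      ∀ x, u x ≤ suppFn P x := by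
  obtain ⟨p, hp⟩ := hint
  obtain ⟨r, hr, hball⟩ := Metric.nhds_basis_closedBall.mem_iff.1 (mem_interior_iff_mem_nhds.1 hp)
  refine ⟨fun x => ⟪x, p⟫_ℝ + r * (√(1 + ‖x‖ ^ 2) - 1), ?_, ?_, fun x => ?_⟩
  · have hsqrt : ContDiff ℝ ∞ fun x : EuclideanSpace ℝ (Fin n) => √(1 + ‖x‖ ^ 2) :=
      (contDiff_const.add (contDiff_norm_sq ℝ)).sqrt fun _ => by positivity
    exact (contDiff_id.inner ℝ contDiff_const).add (contDiff_const.mul (hsqrt.sub contDiff_const))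
  · have hlin : ConvexOn ℝ Set.univ fun x : EuclideanSpace ℝ (Fin n) => ⟪x, p⟫_ℝ :=
      ((innerₗ _).flip p).convexOn convex_univ
    exact hlin.add_strictConvexOn
      (strictConvexOn_const_mul hr (strictConvexOn_sqrt_one_add_norm_sq.add_const (-1)))
  · have hsqrt : √(1 + ‖x‖ ^ 2) ≤ 1 + ‖x‖ :=
      (Real.sqrt_le_left (by positivity)).2 (by nlinarith [norm_nonneg x])
    calc ⟪x, p⟫_ℝ + r * (√(1 + ‖x‖ ^ 2) - 1) ≤ ⟪x, p⟫_ℝ + r * ‖x‖ := by gcongr; linarith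
      _ ≤ suppFn P x := inner_add_mul_norm_le_suppFn hP hr.le hball x

end SupportFunction

section Regularization

variable {E : Type*} [NormedAddCommGroup E] [NormedSpace ℝ E] [FiniteDimensional ℝ E]
  {h φ : E → ℝ} {K : NNReal} {C : ℝ}

theorem tendsto_max_sub_natCast (a b : ℝ) :
    Tendsto (fun j : ℕ => max a (b - j)) atTop (𝓝 a) := by
  refine tendsto_const_nhds.congr' ?_
  filter_upwards [tendsto_natCast_atTop_atTop.eventually_ge_atTop (b - a)] with j hj
  exact (max_eq_left (by linarith)).symm

theorem exists_antitone_contDiff_convexOn_tendsto (hlip : LipschitzWith K h)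
    (hconv : ConvexOn ℝ Set.univ h) (hφ : ConvexOn ℝ Set.univ φ) (hub : ∀ x, φ x ≤ h x + C) :
    ∃ A : ℕ → E → ℝ, (∀ j, ContDiff ℝ ∞ (A j)) ∧ (∀ j, ConvexOn ℝ Set.univ (A j)) ∧
      (∀ x, Antitone fun j => A j x) ∧ (∀ x, Tendsto (fun j => A j x) atTop (𝓝 (φ x))) ∧
      ∀ j x, h x - j ≤ A j x ∧ A j x ≤ h x + |C| + 1 := by
  let ψ (j : ℕ) (x : E) : ℝ := max (φ x) (h x - j)
  have hψ_conv (j : ℕ) : ConvexOn ℝ Set.univ (ψ j) := hφ.sup (hconv.add_const (-(j : ℝ)))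
  have hψ_lip (j : ℕ) : UniformContinuous (ψ j) :=
    ((lipschitzWith_of_convexOn_of_le_add_const hφ hlip hub).max
      (hlip.sub (LipschitzWith.const (j : ℝ)))).uniformContinuous
  have hψ_anti (x : E) : Antitone fun j => ψ j x := fun i j hij => by
    dsimp only [ψ]
    gcongr
  have hψ_le (j : ℕ) (x : E) : ψ j x ≤ h x + |C| :=
    max_le ((hub x).trans (by gcongr; exact le_abs_self C))
      (by linarith [abs_nonneg C, j.cast_nonneg (α := ℝ)])
  obtain ⟨A, hA_smooth, hA_conv, hA_anti, hA_between⟩ :=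
    exists_antitone_contDiff_convexOn_approx hψ_conv hψ_lip hψ_anti
  refine ⟨A, hA_smooth, hA_conv, hA_anti, fun x => ?_, fun j x => ⟨?_, ?_⟩⟩
  · have hψ_lim := tendsto_max_sub_natCast (φ x) (h x)
    refine tendsto_of_tendsto_of_tendsto_of_le_of_le hψ_lim ?_
      (fun j => (hA_between j x).1) (fun j => (hA_between j x).2)
    simpa only [add_zero] using hψ_lim.add tendsto_one_div_add_atTop_nhds_zero_nat
  · exact (le_max_right _ _).trans (hA_between j x).1
  · have : 1 / ((j : ℝ) + 1) ≤ 1 := div_le_one_of_le₀ (by simp) (by positivity)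
    linarith [(hA_between j x).2, hψ_le j x]

theorem statement9_general {u : E → ℝ} (hlip : LipschitzWith K h) (hconv : ConvexOn ℝ Set.univ h)
    (hu_smooth : ContDiff ℝ ∞ u) (hu_conv : StrictConvexOn ℝ Set.univ u) (huh : ∀ x, u x ≤ h x)
    (hφ : ConvexOn ℝ Set.univ φ) (hub : ∀ x, φ x ≤ h x + C) :
    ∃ φseq : ℕ → E → ℝ,
      (∀ j, ContDiff ℝ ∞ (φseq j)) ∧
      (∀ j, StrictConvexOn ℝ Set.univ (φseq j)) ∧
      (∀ j, ∃ M : ℝ, ∀ x, |φseq j x - h x| ≤ M) ∧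
      (∀ x, Antitone fun j => φseq j x) ∧
      (∀ x, Tendsto (fun j => φseq j x) atTop (𝓝 (φ x))) := by
  obtain ⟨A, hA_smooth, hA_conv, hA_anti, hA_lim, hA_bounds⟩ :=
    exists_antitone_contDiff_convexOn_tendsto hlip hconv hφ hub
  refine ⟨fun j x => logSumExp (A j x) (u x - j),
    fun j => contDiff_logSumExp (hA_smooth j) (hu_smooth.sub contDiff_const),
    fun j => strictConvexOn_logSumExp (hA_conv j) (hu_conv.add_const (-(j : ℝ))),
    fun j => ⟨j + |C| + 1 + Real.log 2, fun x => ?_⟩,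
    fun x i j hij => logSumExp_mono (hA_anti x hij) (by gcongr),
    fun x => tendsto_logSumExp_of_tendsto_atBot (hA_lim x)
      (tendsto_const_nhds.add_atBot (tendsto_neg_atTop_atBot.comp tendsto_natCast_atTop_atTop))⟩
  obtain ⟨hA_lower, hA_upper⟩ := hA_bounds j x
  have hlower := left_le_logSumExp (A j x) (u x - j)
  have hupper : logSumExp (A j x) (u x - j) ≤ A j x + Real.log 2 :=
    logSumExp_le_add_log_two (by linarith [huh x])
  rw [abs_le]
  constructor <;>
    linarith [abs_nonneg C, j.cast_nonneg (α := ℝ), Real.log_nonneg one_le_two]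

end Regularization

/-- (Regularization.) Any convex `φ` with `φ ≤ φ_P + C` is the
pointwise decreasing limit of smooth, strictly convex functions `φ_j` such that
each `φ_j - φ_P` is bounded on `ℝⁿ`. -/
theorem statement9 {n : ℕ} (P : Set (EuclideanSpace ℝ (Fin n)))
    (hPcomp : IsCompact P) (hPconv : Convex ℝ P)
    (hPint : (interior P).Nonempty)
    (φ : EuclideanSpace ℝ (Fin n) → ℝ)
    (hφconv : ConvexOn ℝ Set.univ φ)
    (C : ℝ) (hub : ∀ x, φ x ≤ suppFn P x + C) :
    ∃ φseq : ℕ → EuclideanSpace ℝ (Fin n) → ℝ,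
      (∀ j, ContDiff ℝ (⊤ : ℕ∞) (φseq j)) ∧
      (∀ j, StrictConvexOn ℝ Set.univ (φseq j)) ∧
      (∀ j, ∃ M : ℝ, ∀ x, |φseq j x - suppFn P x| ≤ M) ∧
      (∀ x, Antitone fun j => φseq j x) ∧
      (∀ x, Filter.Tendsto (fun j => φseq j x) Filter.atTop (nhds (φ x))) := by
  have hne : P.Nonempty := hPint.mono interior_subset
  obtain ⟨K, hlip⟩ := exists_lipschitzWith_suppFn hPcomp.isBounded hne
  obtain ⟨u, hu_smooth, hu_conv, hu_le⟩ :=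
    exists_contDiff_strictConvexOn_le_suppFn hPcomp.isBounded hPint
  exact statement9_general hlip (convexOn_suppFn hPcomp.isBounded hne) hu_smooth hu_conv hu_le
    hφconv hub
end
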